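/- Let Ω be a domain in ℝⁿ, let Q = Q(a,r) be a cube contained in Ω, let x ∈ cl(Ω) be a Q-visible point, and let β ∈ (0,1]. Then there is a constant C(β), depending only on β, such that for every b₁, b₂ ∈ (x,a], ∫_{[b₁,b₂]} dist(z,∂Ω)^{β−1} ds(z) ≤ C(β)·(‖a−x‖/diam Q)^{1−β}·‖b₁−b₂‖^β. -/

import Mathlib

/-!
Since every segment from `x` into `Q(a,r)` stays in `Ω`, homothety with center `x` and ratio `t`
carries the cube `Q(a,r)` to the cube `Q(z, t r) ⊆ Ω` around `z = x + t (a - x)`. Hence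
`dist(z, ∂Ω) ≥ t r` (`le_bdist_of_visible`), and the weight is at most `(t r)^(β-1)`
(`bdist_rpow_le`). If `b₁`, `b₂` have parameters `t₁`, `t₂`, the point dividing `[b₁,b₂]` in the
ratio `s : (1-s)` has parameter `(1-s) t₁ + s t₂`, which is at least `s |t₂ - t₁|` or
`(1-s) |t₂ - t₁|` according to the sign of `t₂ - t₁`. So the weight is bounded by
`(r |t₂ - t₁|)^(β-1) (s^(β-1) + (1-s)^(β-1))`, whose integral over `s ∈ [0,1]` is
`(r |t₂ - t₁|)^(β-1) · 2/β`. As `‖b₁ - b₂‖ = |t₂ - t₁| ‖a - x‖`, multiplying by `‖b₁ - b₂‖` gives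
the claim with `C = 2^(1-β) · 2/β`.
-/

open MeasureTheory Set Filter ENNReal NNReal

noncomputable section

/-- `ℝⁿ` equipped with the uniform norm `‖x‖ = max_i |x i|`. -/
abbrev Eu (n : ℕ) : Type := Fin n → ℝ

variable {n : ℕ}

/-- The closed cube `Q(x,r)` with center `x` and `diam Q = 2r`
(the closed ball of radius `r` in the uniform norm). -/
def cube (x : Eu n) (r : ℝ) : Set (Eu n) := Metric.closedBall x r

/-- `dist(z, ∂Ω)`, the distance from `z` to the boundary of `Ω`. -/
def bdist (Ω : Set (Eu n)) (z : Eu n) : ℝ := Metric.infDist z (frontier Ω)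

/-- The distance between two sets. -/
def setDistS (A B : Set (Eu n)) : ℝ := sInf {d : ℝ | ∃ a ∈ A, ∃ b ∈ B, d = dist a b}

/-- The line integral `∫_{[x,y]} ρ(z) ds(z)` of `ρ` over the segment `[x,y]`
with respect to arc length. -/
def segInt (ρ : Eu n → ℝ) (x y : Eu n) : ℝ :=
  ∫ t in (0:ℝ)..1, ρ (x + t • (y - x)) * ‖y - x‖

/-- The set of subhyperbolic lengths `∫_γ dist(z,∂Ω)^{α-1} ds(z)` of rectifiable curves in `Ω`
joining `x` to `y`; rectifiable curves are encoded by their arc-length parametrizations,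
i.e. `1`-Lipschitz maps `γ : [0,L] → Ω`. -/
def subLenSet (Ω : Set (Eu n)) (α : ℝ) (x y : Eu n) : Set ℝ :=
  {d : ℝ | ∃ (L : ℝ) (γ : ℝ → Eu n), 0 ≤ L ∧
    LipschitzOnWith 1 γ (Icc 0 L) ∧ γ 0 = x ∧ γ L = y ∧
    (∀ s ∈ Icc (0:ℝ) L, γ s ∈ Ω) ∧
    IntervalIntegrable (fun s => bdist Ω (γ s) ^ (α - 1)) volume 0 L ∧
    d = ∫ s in (0:ℝ)..L, bdist Ω (γ s) ^ (α - 1)}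

/-- The subhyperbolic metric `d_{α,Ω}(x,y)`. -/
def dSub (Ω : Set (Eu n)) (α : ℝ) (x y : Eu n) : ℝ := sInf (subLenSet Ω α x y)

/-- The metric `d̃_{α,Ω}(x,y) = d_{α,Ω}(x,y) + ‖x-y‖^α`. -/
def dTil (Ω : Set (Eu n)) (α : ℝ) (x y : Eu n) : ℝ := dSub Ω α x y + ‖x - y‖ ^ α

/-- The half-open segment `(x,a]`. -/
def segOC (x a : Eu n) : Set (Eu n) := {z | ∃ t ∈ Set.Ioc (0:ℝ) 1, z = x + t • (a - x)}

/-- `x` is `Q`-visible in `Ω`: for each `y ∈ Q` the half-open segment `(x,y]` lies in `Ω`. -/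
def QVisible (Ω Q : Set (Eu n)) (x : Eu n) : Prop :=
  ∀ y ∈ Q, ∀ t ∈ Set.Ioc (0:ℝ) 1, x + t • (y - x) ∈ Ω

/-- `O_ε(∂Ω)`, the ε-neighborhood of `∂Ω` in `Ω`. -/
def Oeps (Ω : Set (Eu n)) (ε : ℝ) : Set (Eu n) := {x ∈ Ω | bdist Ω x < ε}

/-- The cube `Q(x + t (a - x), t r)`, the homothetic image of `Q(a,r)` about the visible point `x`,
lies in `Ω`. -/
lemma closedBall_subset_of_visible {Ω : Set (Eu n)} {a x : Eu n} {r t : ℝ}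
    (hv : QVisible Ω (cube a r) x) (ht : t ∈ Ioc (0:ℝ) 1) :
    Metric.closedBall (x + t • (a - x)) (t * r) ⊆ Ω := by
  intro w hw
  have ht0 := ht.1
  -- The preimage of `w` under the homothety.
  have hy : x + t⁻¹ • (w - x) ∈ cube a r := by
    have h1 : x + t⁻¹ • (w - x) - a = t⁻¹ • (w - (x + t • (a - x))) := by
      rw [sub_add_eq_sub_sub, smul_sub _ (w - x), smul_smul, inv_mul_cancel₀ ht0.ne', one_smul]
      abel
    rw [Metric.mem_closedBall, dist_eq_norm] at hw
    rw [cube, Metric.mem_closedBall, dist_eq_norm, h1, norm_smul, norm_inv, Real.norm_of_nonneg ht0.le,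
      inv_mul_le_iff₀ ht0]
    exact hw
  have := hv _ hy t ht
  rwa [add_sub_cancel_left, smul_smul, mul_inv_cancel₀ ht0.ne', one_smul,
    add_sub_cancel] at this

lemma le_bdist_of_visible {Ω : Set (Eu n)} (hΩ : IsOpen Ω) {a x : Eu n} {r t : ℝ}
    (hv : QVisible Ω (cube a r) x) (ht : t ∈ Ioc (0:ℝ) 1) (hne : (frontier Ω).Nonempty) :
    t * r ≤ bdist Ω (x + t • (a - x)) := by
  refine (Metric.le_infDist hne).2 fun w hw => ?_
  by_contra! h
  have hwΩ : w ∈ Ω := closedBall_subset_of_visible hv ht (by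
    rw [Metric.mem_closedBall, dist_comm]; exact h.le)
  rw [hΩ.frontier_eq] at hw
  exact hw.2 hwΩ

lemma bdist_rpow_le {Ω : Set (Eu n)} (hΩ : IsOpen Ω) {a x : Eu n} {r t β : ℝ} (hr : 0 < r)
    (hβ : β ≤ 1) (hv : QVisible Ω (cube a r) x) (ht : t ∈ Ioc (0:ℝ) 1) :
    bdist Ω (x + t • (a - x)) ^ (β - 1) ≤ (t * r) ^ (β - 1) := by
  have htr : 0 < t * r := mul_pos ht.1 hr
  rcases (frontier Ω).eq_empty_or_nonempty with he | hne
  · -- With empty boundary, `bdist` takes the junk value `0`, and `0 ^ (β - 1)` is `0` or `1`.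
    rw [bdist, he, Metric.infDist_empty]
    rcases hβ.eq_or_lt with rfl | hlt
    · simp
    · rw [Real.zero_rpow (by linarith)]
      positivity
  · exact Real.rpow_le_rpow_of_nonpos htr (le_bdist_of_visible hΩ hv ht hne) (by linarith)

/-- The integrand of `segInt` on `[b₁,b₂]` is dominated by a function of `s` with integrable
singularities at both endpoints. Keeping both summands treats `t₁ < t₂` and `t₂ < t₁` at once. -/
lemma bdist_rpow_segment_le {Ω : Set (Eu n)} (hΩ : IsOpen Ω) {a x : Eu n} {r t₁ t₂ s β : ℝ}
    (hr : 0 < r) (hβ : β ≤ 1) (hv : QVisible Ω (cube a r) x) (h₁ : t₁ ∈ Ioc (0:ℝ) 1)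
    (h₂ : t₂ ∈ Ioc (0:ℝ) 1) (hne : t₁ ≠ t₂) (hs : s ∈ Ioo (0:ℝ) 1) :
    bdist Ω (x + (t₁ + s * (t₂ - t₁)) • (a - x)) ^ (β - 1) ≤
      (r * |t₂ - t₁|) ^ (β - 1) * (s ^ (β - 1) + (1 - s) ^ (β - 1)) := by
  obtain ⟨hs0, hs1⟩ := hs
  have hs1' : 0 < 1 - s := by linarith
  have hd : 0 < |t₂ - t₁| := abs_pos.2 (sub_ne_zero.2 hne.symm)
  have ht : t₁ + s * (t₂ - t₁) ∈ Ioc (0:ℝ) 1 := by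
    constructor <;> nlinarith [h₁.1, h₁.2, h₂.1, h₂.2]
  refine (bdist_rpow_le hΩ hr hβ hv ht).trans ?_
  have key : ∀ u : ℝ, 0 < u → u * |t₂ - t₁| ≤ t₁ + s * (t₂ - t₁) →
      ((t₁ + s * (t₂ - t₁)) * r) ^ (β - 1) ≤ (r * |t₂ - t₁|) ^ (β - 1) * u ^ (β - 1) := by
    intro u hu h
    rw [← Real.mul_rpow (by positivity) hu.le]
    refine Real.rpow_le_rpow_of_nonpos (by positivity) ?_ (by linarith)
    nlinarith
  have p : 0 ≤ (r * |t₂ - t₁|) ^ (β - 1) := by positivity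
  have p1 : 0 ≤ s ^ (β - 1) := by positivity
  have p2 : 0 ≤ (1 - s) ^ (β - 1) := by positivity
  rcases le_total t₁ t₂ with h | h
  · have := key s hs0 (by rw [abs_of_nonneg (by linarith)]; linarith [h₁.1])
    nlinarith [mul_nonneg p p2]
  · have := key (1 - s) hs1' (by rw [abs_of_nonpos (by linarith)]; linarith [h₂.1])
    nlinarith [mul_nonneg p p1]

lemma intervalIntegrable_two_sided {β : ℝ} (hβ : 0 < β) :
    IntervalIntegrable (fun s : ℝ => s ^ (β - 1)) volume 0 1 ∧
    IntervalIntegrable (fun s : ℝ => (1 - s) ^ (β - 1)) volume 0 1 := by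
  have h : IntervalIntegrable (fun s : ℝ => s ^ (β - 1)) volume 0 1 :=
    intervalIntegral.intervalIntegrable_rpow' (by linarith)
  refine ⟨h, ?_⟩
  have h2 := (h.comp_sub_left 1).symm
  simpa using h2

lemma integral_two_sided {β : ℝ} (hβ : 0 < β) :
    ∫ s in (0:ℝ)..1, (s ^ (β - 1) + (1 - s) ^ (β - 1)) = 2 / β := by
  have h0 : ∫ s in (0:ℝ)..1, s ^ (β - 1) = 1 / β := by
    rw [integral_rpow (Or.inl (by linarith)), sub_add_cancel, Real.one_rpow,
      Real.zero_rpow hβ.ne', sub_zero]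
  have h1 : ∫ s in (0:ℝ)..1, (1 - s) ^ (β - 1) = 1 / β := by
    rw [intervalIntegral.integral_comp_sub_left (fun s : ℝ => s ^ (β - 1)) 1]
    simpa using h0
  rw [intervalIntegral.integral_add (intervalIntegrable_two_sided hβ).1
    (intervalIntegrable_two_sided hβ).2, h0, h1]
  ring

/-- Lemma 2.2 (i).  Let `Q = Q(a,r)` be a cube in a domain `Ω ⊆ ℝⁿ`,
let `x ∈ cl(Ω)` be a `Q`-visible point and let `β ∈ (0,1]`.  Then there is a constant
`C(β) > 0`, depending only on `β`, such that for every `b₁, b₂ ∈ (x,a]`,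
`∫_{[b₁,b₂]} dist(z,∂Ω)^{β−1} ds(z) ≤ C(β)·(‖a−x‖/diam Q)^{1−β}·‖b₁−b₂‖^β`. -/
theorem statement3 (β : ℝ) (hβ : β ∈ Set.Ioc (0:ℝ) 1) :
    ∃ C : ℝ, 0 < C ∧
      ∀ (n : ℕ) (Ω : Set (Eu n)), IsOpen Ω → IsConnected Ω →
        ∀ (a : Eu n) (r : ℝ), 0 < r → cube a r ⊆ Ω →
          ∀ x ∈ closure Ω, QVisible Ω (cube a r) x →
            ∀ b₁ ∈ segOC x a, ∀ b₂ ∈ segOC x a,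
              segInt (fun z => bdist Ω z ^ (β - 1)) b₁ b₂ ≤
                C * (‖a - x‖ / (2 * r)) ^ (1 - β) * ‖b₁ - b₂‖ ^ β := by
  obtain ⟨hβ0, hβ1⟩ := hβ
  refine ⟨2 ^ (1 - β) * (2 / β), by positivity, ?_⟩
  rintro n Ω hΩ - a r hr - x - hv b₁ ⟨t₁, h₁, hb₁⟩ b₂ ⟨t₂, h₂, hb₂⟩
  by_cases hb : b₁ = b₂
  · subst hb
    simp only [segInt, sub_self, norm_zero, mul_zero, intervalIntegral.integral_zero]
    positivity
  have hdiff : b₂ - b₁ = (t₂ - t₁) • (a - x) := by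
    rw [hb₁, hb₂, sub_smul]; abel
  have ht : t₁ ≠ t₂ := by
    rintro rfl
    exact hb (hb₁.trans hb₂.symm)
  have hax : 0 < ‖a - x‖ := by
    rw [norm_pos_iff]
    intro h0
    rw [h0, smul_zero] at hdiff
    exact hb (sub_eq_zero.1 hdiff).symm
  have hd : 0 < |t₂ - t₁| := abs_pos.2 (sub_ne_zero.2 ht.symm)
  have hnorm : ‖b₂ - b₁‖ = |t₂ - t₁| * ‖a - x‖ := by
    rw [hdiff, norm_smul, Real.norm_eq_abs]
  have hnn : ∀ z, 0 ≤ bdist Ω z := fun z => Metric.infDist_nonneg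
  have hI := intervalIntegrable_two_sided hβ0
  -- Only the dominating function needs to be integrable: a nonintegrable integrand would have
  -- Bochner integral `0`.
  have hle : segInt (fun z => bdist Ω z ^ (β - 1)) b₁ b₂ ≤
      ∫ s in (0:ℝ)..1, (r * |t₂ - t₁|) ^ (β - 1) * (s ^ (β - 1) + (1 - s) ^ (β - 1)) *
        ‖b₂ - b₁‖ := by
    have hg : IntervalIntegrable (fun s : ℝ => (r * |t₂ - t₁|) ^ (β - 1) *
        (s ^ (β - 1) + (1 - s) ^ (β - 1)) * ‖b₂ - b₁‖) volume 0 1 :=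
      ((hI.1.add hI.2).const_mul _).mul_const _
    rw [intervalIntegrable_iff_integrableOn_Ioo_of_le zero_le_one] at hg
    rw [segInt, intervalIntegral.integral_of_le zero_le_one,
      intervalIntegral.integral_of_le zero_le_one, integral_Ioc_eq_integral_Ioo,
      integral_Ioc_eq_integral_Ioo]
    refine integral_mono_of_nonneg (Eventually.of_forall fun s => ?_) hg ?_
    · exact mul_nonneg (Real.rpow_nonneg (hnn _) _) (norm_nonneg _)
    · refine (ae_restrict_iff' measurableSet_Ioo).2 (Eventually.of_forall fun s hs => ?_)
      have hpt : b₁ + s • (b₂ - b₁) = x + (t₁ + s * (t₂ - t₁)) • (a - x) := by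
        rw [hdiff, hb₁, smul_smul, add_smul, add_assoc]
      simp only [hpt]
      exact mul_le_mul_of_nonneg_right
        (bdist_rpow_segment_le hΩ hr hβ1 hv h₁ h₂ ht hs) (norm_nonneg _)
  refine hle.trans (le_of_eq ?_)
  rw [intervalIntegral.integral_mul_const, intervalIntegral.integral_const_mul,
    integral_two_sided hβ0, norm_sub_rev b₁ b₂, hnorm]
  generalize |t₂ - t₁| = d at hd
  generalize ‖a - x‖ = A at hax
  have e1 : (d * A) ^ β = d ^ β * A ^ β := Real.mul_rpow hd.le hax.le
  have e2 : (A / (2 * r)) ^ (1 - β) = A ^ (1 - β) / (2 ^ (1 - β) * r ^ (1 - β)) := by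
    rw [Real.div_rpow hax.le (by positivity), Real.mul_rpow zero_le_two hr.le]
  have e3 : (r * d) ^ (β - 1) = (r ^ (1 - β))⁻¹ * (d ^ β / d) := by
    rw [Real.mul_rpow hr.le hd.le, Real.rpow_sub_one hd.ne', ← Real.rpow_neg hr.le, neg_sub]
  have e4 : A ^ (1 - β) = A / A ^ β := by
    rw [Real.rpow_sub hax, Real.rpow_one]
  rw [e1, e2, e3, e4]
  have : 0 < r ^ (1 - β) := by positivity
  have : 0 < A ^ β := by positivity
  have : (0:ℝ) < 2 ^ (1 - β) := by positivity
  field_simp
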